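/- arXiv:2404.17162 — 2 statements merged into one kernel-verified Lean document; each statement's English description precedes it below -/
import Mathlib

section
/- Let A be an Abelian group with |A| > 2. If a connected finite simple graph G has at most three equivalence classes under the relation ∼_G (where u ∼_G v iff N_G(u) = N_G(v)), then G is A-vertex magic. -/
/-!
If `w₁w₂` is an edge and `v` is adjacent to neither endpoint, then `v`, `w₁`, `w₂` and any neighbor
of `v` lie in four different classes of `∼_G`. Hence a connected graph with at most three classes
is complete multipartite. As `|A| > 2`, every part can be labeled by nonzero elements with the same
sum `s`; the neighborhood of a vertex is the complement of its part, so every vertex has weight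
`(sum of all labels) - s`.
-/

open scoped Classical

/-- A graph `G` on a finite vertex type is `A`-vertex magic if there is a labeling of the
vertices by nonzero elements of `A` such that the sum of the labels over each open
neighborhood is a constant `μ`. -/
def vertexMagic {V : Type*} [Fintype V] (G : SimpleGraph V) (A : Type*) [AddCommGroup A] :
    Prop :=
  ∃ (l : V → A) (μ : A), (∀ v, l v ≠ 0) ∧
    ∀ v : V, (∑ u : V, if G.Adj v u then l u else 0) = μ

/-- The equivalence relation `u ∼_G v ↔ N_G(u) = N_G(v)`. -/
def nbhdSetoid {V : Type*} (G : SimpleGraph V) : Setoid V :=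
  ⟨fun u v => G.neighborSet u = G.neighborSet v,
    ⟨fun _ => rfl, Eq.symm, Eq.trans⟩⟩

/-- The reduced graph of `G`: vertices are the equivalence classes of `∼_G`, with `[u]`
adjacent to `[v]` iff `u` is adjacent to `v` in `G`. -/
def reducedGraph {V : Type*} (G : SimpleGraph V) :
    SimpleGraph (Quotient (nbhdSetoid G)) where
  Adj x y := ∃ u v : V, Quotient.mk (nbhdSetoid G) u = x ∧
    Quotient.mk (nbhdSetoid G) v = y ∧ G.Adj u v
  symm := by
    constructor
    rintro x y ⟨u, v, hu, hv, h⟩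
    exact ⟨v, u, hv, hu, h.symm⟩
  loopless := by
    constructor
    rintro x ⟨u, v, hu, hv, h⟩
    rw [← hv] at hu
    have hN : G.neighborSet u = G.neighborSet v := Quotient.exact hu
    have hm : u ∈ G.neighborSet v := h.symm
    rw [← hN] at hm
    exact G.loopless.irrefl u hm

section Labeling

variable {V A : Type*} [AddCommGroup A]

theorem exists_forall_ne_zero_sum_eq (hA : 2 < Cardinal.mk A) {S : Finset V} (hS : S.Nonempty)
    {s : A} (hs : s ≠ 0) : ∃ l : V → A, (∀ v, l v ≠ 0) ∧ ∑ v ∈ S, l v = s := by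
  induction hS using Finset.Nonempty.cons_induction generalizing s with
  | singleton a => exact ⟨fun _ => s, fun _ => hs, Finset.sum_singleton _ _⟩
  | cons a S ha _ ih =>
    -- Labeling `a` by `b ≠ s` leaves the nonzero sum `s - b` to be realized on `S`.
    obtain ⟨b, hb, hbs⟩ : ∃ b : A, b ≠ 0 ∧ b ≠ s := by
      simpa using Cardinal.exists_notMem_of_length_lt [0, s] (by simpa using hA)
    obtain ⟨l, hl, hsum⟩ := ih (sub_ne_zero.mpr hbs.symm)
    refine ⟨Function.update l a b, (Function.forall_update_iff l fun _ x => x ≠ 0).mpr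
      ⟨hb, fun v _ => hl v⟩, ?_⟩
    rw [Finset.sum_cons, Function.update_self, Finset.sum_update_of_notMem ha, hsum,
      add_sub_cancel]

theorem exists_forall_ne_zero_sum_fiber_eq [Fintype V] {ι : Type*} (hA : 2 < Cardinal.mk A)
    {f : V → ι} (hf : f.Surjective) {s : ι → A} (hs : ∀ i, s i ≠ 0) :
    ∃ l : V → A, (∀ v, l v ≠ 0) ∧ ∀ i, ∑ v with f v = i, l v = s i := by
  have fiber_nonempty (i : ι) : ({v | f v = i} : Finset V).Nonempty := by
    obtain ⟨v, hv⟩ := hf i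
    exact ⟨v, by simpa using hv⟩
  choose l hl hsum using fun i => exists_forall_ne_zero_sum_eq hA (fiber_nonempty i) (hs i)
  refine ⟨fun v => l (f v) v, fun v => hl (f v) v, fun i => ?_⟩
  rw [← hsum i]
  exact Finset.sum_congr rfl fun v hv => congrArg (l · v) (Finset.mem_filter.mp hv).2

end Labeling

section Graph

variable {V : Type*} {G : SimpleGraph V}

theorem vertexMagic_of_isCompleteMultipartite [Fintype V] (hG : G.IsCompleteMultipartite)
    {A : Type*} [AddCommGroup A] (hA : 2 < Cardinal.mk A) : vertexMagic G A := by
  have : Nontrivial A := Cardinal.one_lt_iff_nontrivial.mp (Cardinal.one_lt_two.trans hA)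
  obtain ⟨s, hs⟩ := exists_ne (0 : A)
  obtain ⟨l, hl, hsum⟩ := exists_forall_ne_zero_sum_fiber_eq hA
    (Quotient.mk_surjective (s := hG.setoid)) fun _ => hs
  have same_part_iff (v u : V) :
      Quotient.mk hG.setoid u = Quotient.mk hG.setoid v ↔ ¬ G.Adj v u := by
    rw [G.adj_comm]
    exact Quotient.eq
  refine ⟨l, ∑ u, l u - s, hl, fun v => ?_⟩
  have part_sum : ∑ u with ¬ G.Adj v u, l u = s := by
    simpa only [same_part_iff] using hsum (Quotient.mk hG.setoid v)
  rw [eq_sub_iff_add_eq, ← Finset.sum_filter, ← part_sum, Finset.sum_filter_add_sum_filter_not]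

theorem mk_nbhdSetoid_ne_of_adj_of_not_adj {a b c : V} (hac : G.Adj a c) (hbc : ¬ G.Adj b c) :
    Quotient.mk (nbhdSetoid G) a ≠ Quotient.mk (nbhdSetoid G) b := by
  intro hab
  have hN : G.neighborSet a = G.neighborSet b := Quotient.exact hab
  exact hbc (hN.subset hac)

variable [Fintype (Quotient (nbhdSetoid G))]

theorem four_le_card_quotient_nbhdSetoid {v w₁ w₂ x : V} (h : G.IsPathGraph3Compl v w₁ w₂)
    (hvx : G.Adj v x) : 4 ≤ Fintype.card (Quotient (nbhdSetoid G)) := by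
  have hvx' := mk_nbhdSetoid_ne_of_adj_of_not_adj hvx G.irrefl
  have hvw₁ := (mk_nbhdSetoid_ne_of_adj_of_not_adj h.adj h.not_adj_snd).symm
  have hvw₂ := (mk_nbhdSetoid_ne_of_adj_of_not_adj h.adj.symm h.not_adj_fst).symm
  have hxw₁ := mk_nbhdSetoid_ne_of_adj_of_not_adj hvx.symm (mt G.adj_symm h.not_adj_fst)
  have hxw₂ := mk_nbhdSetoid_ne_of_adj_of_not_adj hvx.symm (mt G.adj_symm h.not_adj_snd)
  have hw₁w₂ := mk_nbhdSetoid_ne_of_adj_of_not_adj h.adj G.irrefl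
  have classes_nodup : ([v, x, w₁, w₂].map (Quotient.mk (nbhdSetoid G))).Nodup := by
    simp [*]
  simpa using classes_nodup.length_le_card

theorem isCompleteMultipartite_of_card_quotient_nbhdSetoid_le_three (hG : G.Preconnected)
    (hclasses : Fintype.card (Quotient (nbhdSetoid G)) ≤ 3) : G.IsCompleteMultipartite := by
  by_contra h_not_multipartite
  obtain ⟨v, w₁, w₂, h⟩ :=
    SimpleGraph.exists_isPathGraph3Compl_of_not_isCompleteMultipartite h_not_multipartite
  have : Nontrivial V := ⟨v, w₁, h.ne_fst⟩
  obtain ⟨x, hvx⟩ := hG.exists_adj_of_nontrivial v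
  have := four_le_card_quotient_nbhdSetoid h hvx
  omega

end Graph

theorem stmt_4 {V : Type*} [Fintype V] (G : SimpleGraph V) (hG : G.Connected)
    (hclasses : Fintype.card (Quotient (nbhdSetoid G)) ≤ 3)
    (A : Type*) [AddCommGroup A] (hA : 2 < Cardinal.mk A) :
    vertexMagic G A :=
  vertexMagic_of_isCompleteMultipartite
    (isCompleteMultipartite_of_card_quotient_nbhdSetoid_le_three hG.preconnected hclasses) hA
end

section
/- Let n ≡ 2 (mod 4) with n ≥ 6 and let m ≥ 1 with m ≢ 1 (mod 3). For a non-trivial Abelian group A, the generalised friendship graph f_{n,m} is A-vertex magic if and only if A is not isomorphic to Z_3. -/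
open scoped Classical

/-- The generalised friendship graph `f_{n,m}`: `m` cycles of length `n` all meeting at a
single common vertex (the vertex `none`) and otherwise pairwise disjoint.  The vertices of
the `i`-th cycle other than the common vertex are `some (i, 0), …, some (i, n - 2)`, laid
out consecutively along the cycle with both ends joined to the common vertex. -/
def genFriendshipGraph (n m : ℕ) : SimpleGraph (Option (Fin m × Fin (n - 1))) where
  Adj x y :=
    match x, y with
    | none, none => False
    | none, some (_, j) => j.val = 0 ∨ j.val = n - 2
    | some (_, j), none => j.val = 0 ∨ j.val = n - 2
    | some (i, j), some (i', j') => i = i' ∧ (j.val + 1 = j'.val ∨ j'.val + 1 = j.val)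
  symm := by
    refine ⟨?_⟩
    rintro (_ | ⟨i, j⟩) (_ | ⟨i', j'⟩) h <;> simp_all; tauto
  loopless := by
    refine ⟨?_⟩
    rintro (_ | ⟨i, j⟩) h <;> simp_all

/-!
Walking around one cycle, the magic condition says that labels two steps apart add up to `μ`.
Hence labels are `4`-periodic along the cycle, and since its length is `2` modulo `4`, starting and
ending at the centre (labelled `c`) forces `μ = 2c` and the pattern `c, x, c, 2c - x, c, x, …`,
whose two ends next to the centre carry the same label `x`.  So a magic labeling amounts to a
nonzero `c` and one `xᵢ ∉ {0, 2c}` per cycle with `∑ 2xᵢ = 2c`.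

In `ℤ/3` every `xᵢ` must equal `c`, so the sum condition reads `m ≡ 1 (mod 3)`.  In any other
group take `c ≠ 0`.  If `4c = 0`, then `c` or `2c` has order two, and an element `a` of order two
works with all `xᵢ = a`.  Otherwise both `0` and `c` are sums of two elements outside `{0, 2c}`:
`0 = c + (-c)` and `c = 3c + (-2c)` if `3c ≠ 0`, while `0 = b + (-b)` and `c = b + (c - b)` for any
`b` not in the subgroup generated by `c` if `3c = 0`.  Hence `c` is a sum of any number `m ≥ 1` of
elements outside `{0, 2c}`.
-/

theorem sum_ite_of_iff_eq_or_eq {ι M : Type*} [Fintype ι] [AddCommMonoid M] {p : ι → Prop}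
    [DecidablePred p] {a b : ι} (hp : ∀ u, p u ↔ u = a ∨ u = b) (hab : a ≠ b) (f : ι → M) :
    (∑ u, if p u then f u else 0) = f a + f b := by
  rw [Finset.sum_eq_add a b hab (fun u _ hu => if_neg (by grind)) (by simp) (by simp),
    if_pos ((hp a).2 (.inl rfl)), if_pos ((hp b).2 (.inr rfl))]

theorem apply_add_four_mul_of_add_eq {M : Type*} [AddCancelCommMonoid M] {a : ℕ → M} {μ : M}
    {N : ℕ} (h : ∀ p, p + 2 ≤ N → a p + a (p + 2) = μ) (r k : ℕ) (hk : r + 4 * k ≤ N) :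
    a (r + 4 * k) = a r := by
  induction k with
  | zero => rfl
  | succ k ih =>
    have h₁ := h (r + 4 * k) (by lia)
    have h₂ := h (r + 4 * k + 2) (by lia)
    rw [← ih (by lia)]
    exact add_left_cancel (h₂.trans (h₁.symm.trans (add_comm _ _)))

theorem exists_fin_sum_eq_of_add_eq {A : Type*} [AddCommGroup A] {S : Set A} {c d b₁ b₂ : A}
    (hc : c ∈ S) (hd : d ∈ S) (hd' : -d ∈ S) (hb₁ : b₁ ∈ S) (hb₂ : b₂ ∈ S)
    (hb : b₁ + b₂ = c) :
    ∀ m, 1 ≤ m → ∃ x : Fin m → A, (∀ i, x i ∈ S) ∧ ∑ i, x i = c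
  | 1, _ => ⟨fun _ => c, fun _ => hc, by simp⟩
  | 2, _ => ⟨![b₁, b₂], by simp [Fin.forall_fin_two, hb₁, hb₂], by simpa using hb⟩
  | m + 3, _ => by
    obtain ⟨x, hx, hsum⟩ := exists_fin_sum_eq_of_add_eq hc hd hd' hb₁ hb₂ hb (m + 1) (by lia)
    exact ⟨Fin.cons d (Fin.cons (-d) x), Fin.cases hd (Fin.cases hd' hx),
      by simp [Fin.sum_cons, hsum]⟩

theorem exists_notMem_zmultiples {A : Type*} [AddGroup A] {p : ℕ} [Fact p.Prime]
    (hA : ¬ Nonempty (A ≃+ ZMod p)) {c : A} (hpc : p • c = 0) (hc : c ≠ 0) :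
    ∃ b, b ∉ AddSubgroup.zmultiples c := by
  by_contra! hgen
  have hcard : Nat.card A = p :=
    (addOrderOf_eq_card_of_forall_mem_zmultiples hgen).symm.trans
      (addOrderOf_eq_prime hpc hc)
  exact hA ⟨(zmodAddEquivOfGenerator hgen hcard).symm⟩

theorem vertexMagic_of_injective {V A B : Type*} [Fintype V] {G : SimpleGraph V}
    [AddCommGroup A] [AddCommGroup B] (f : A →+ B) (hf : Function.Injective f) :
    vertexMagic G A → vertexMagic G B := by
  rintro ⟨l, μ, hl, hμ⟩
  refine ⟨fun v => f (l v), f μ, fun v => (map_ne_zero_iff f hf).2 (hl v), fun v => ?_⟩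
  simp only [← hμ v, map_sum, apply_ite f, map_zero]

/-- The algebraic condition to which a magic labeling of `genFriendshipGraph n m` reduces when
`n ≡ 2 (mod 4)`: `c` is the label of the centre and `x i` the common label of the two neighbours
of the centre on the `i`-th cycle. -/
def HasSpokeLabels (A : Type*) [AddCommGroup A] (m : ℕ) : Prop :=
  ∃ c : A, c ≠ 0 ∧ ∃ x : Fin m → A, (∀ i, x i ≠ 0 ∧ x i ≠ 2 • c) ∧ ∑ i, 2 • x i = 2 • c

namespace HasSpokeLabels

variable {A : Type*} [AddCommGroup A] {m : ℕ}

theorem of_two_nsmul_eq_zero {c : A} (hc : c ≠ 0) (h2 : 2 • c = 0) : HasSpokeLabels A m :=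
  ⟨c, hc, fun _ => c, fun _ => ⟨hc, by rwa [h2]⟩, by simp [h2]⟩

theorem of_add_eq {c d b₁ b₂ : A} (hm : 1 ≤ m) (hc : c ≠ 0) (hd : d ≠ 0 ∧ d ≠ 2 • c)
    (hd' : -d ≠ 2 • c) (hb₁ : b₁ ≠ 0 ∧ b₁ ≠ 2 • c) (hb₂ : b₂ ≠ 0 ∧ b₂ ≠ 2 • c)
    (hb : b₁ + b₂ = c) : HasSpokeLabels A m := by
  obtain ⟨x, hx, hsum⟩ := exists_fin_sum_eq_of_add_eq (S := {y | y ≠ 0 ∧ y ≠ 2 • c})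
    ⟨hc, by simpa [two_nsmul] using hc⟩ hd ⟨neg_ne_zero.2 hd.1, hd'⟩ hb₁ hb₂ hb m hm
  exact ⟨c, hc, x, hx, by rw [← Finset.smul_sum, hsum]⟩

theorem of_three_nsmul_ne_zero {c : A} (hm : 1 ≤ m) (h3 : 3 • c ≠ 0) (h4 : 4 • c ≠ 0) :
    HasSpokeLabels A m :=
  of_add_eq (c := c) (d := c) (b₁ := 3 • c) (b₂ := -(2 • c)) hm (by grind) (by grind) (by grind)
    (by grind) (by grind) (by abel)

theorem of_notMem_zmultiples {b c : A} (hm : 1 ≤ m) (hc : c ≠ 0)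
    (hb : b ∉ AddSubgroup.zmultiples c) : HasSpokeLabels A m := by
  have hb_ne {z : A} (hz : z ∈ AddSubgroup.zmultiples c) : b ≠ z := fun h => hb (h ▸ hz)
  have hc_mem : c ∈ AddSubgroup.zmultiples c := AddSubgroup.mem_zmultiples c
  have h2c_mem : 2 • c ∈ AddSubgroup.zmultiples c := nsmul_mem hc_mem 2
  have hb' : b ≠ 0 ∧ b ≠ 2 • c := ⟨hb_ne (zero_mem _), hb_ne h2c_mem⟩
  have hneg : -b ≠ 2 • c := neg_eq_iff_eq_neg.not.2 (hb_ne (neg_mem h2c_mem))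
  have hsub : c - b ≠ 2 • c := fun h => hb_ne (neg_mem hc_mem) (by grind)
  exact of_add_eq hm hc hb' hneg hb' ⟨sub_ne_zero.2 (hb_ne hc_mem).symm, hsub⟩
    (add_sub_cancel b c)

theorem of_not_addEquiv_zmod_three [Nontrivial A] (hm : 1 ≤ m)
    (hA : ¬ Nonempty (A ≃+ ZMod 3)) : HasSpokeLabels A m := by
  obtain ⟨c, hc⟩ := exists_ne (0 : A)
  by_cases h2 : 2 • c = 0
  · exact of_two_nsmul_eq_zero hc h2
  by_cases h4 : 4 • c = 0
  · exact of_two_nsmul_eq_zero h2 (by rwa [← mul_nsmul])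
  by_cases h3 : 3 • c = 0
  · obtain ⟨b, hb⟩ := exists_notMem_zmultiples hA h3 hc
    exact of_notMem_zmultiples hm hc hb
  · exact of_three_nsmul_ne_zero hm h3 h4

end HasSpokeLabels

theorem hasSpokeLabels_zmod_three_iff {m : ℕ} : HasSpokeLabels (ZMod 3) m ↔ m % 3 = 1 := by
  have hm : m % 3 = 1 ↔ (m : ZMod 3) = 1 := by
    simpa [Nat.ModEq] using (ZMod.natCast_eq_natCast_iff m 1 3).symm
  rw [hm]
  constructor
  · rintro ⟨c, hc, x, hx, hsum⟩
    have eq_of_ne : ∀ a y : ZMod 3, a ≠ 0 → y ≠ 0 ∧ y ≠ 2 • a → y = a := by decide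
    have two_nsmul_ne_zero : ∀ a : ZMod 3, a ≠ 0 → 2 • a ≠ 0 := by decide
    have hxc : ∀ i, x i = c := fun i => eq_of_ne c (x i) hc (hx i)
    have hmul : (m : ZMod 3) * (2 • c) = 2 • c := by simpa [hxc] using hsum
    exact (mul_eq_right₀ (two_nsmul_ne_zero c hc)).1 hmul
  · intro h
    have h12 : (1 : ZMod 3) ≠ 2 • 1 := by decide
    exact ⟨1, one_ne_zero, fun _ => 1, fun _ => ⟨one_ne_zero, h12⟩, by simp [h]⟩

namespace genFriendshipGraph

variable {n m : ℕ}

/-- The vertex at position `p` along the `i`-th cycle, walked from the centre (position `0`)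
back to the centre (position `n`). All positions from `n` on are sent to the centre. -/
def cycleVertex (n : ℕ) {m : ℕ} (i : Fin m) : ℕ → Option (Fin m × Fin (n - 1))
  | 0 => none
  | p + 1 => if h : p < n - 1 then some (i, ⟨p, h⟩) else none

@[simp]
theorem cycleVertex_zero (i : Fin m) : cycleVertex n i 0 = none := rfl

@[simp]
theorem cycleVertex_add_one (i : Fin m) (j : Fin (n - 1)) :
    cycleVertex n i (j + 1) = some (i, j) := by
  simp [cycleVertex]

theorem cycleVertex_of_le (i : Fin m) {p : ℕ} (hp : n ≤ p) : cycleVertex n i p = none := by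
  cases p with
  | zero => rfl
  | succ p => exact dif_neg (by lia)

theorem adj_some_iff (i : Fin m) (j : Fin (n - 1)) (u : Option (Fin m × Fin (n - 1))) :
    (genFriendshipGraph n m).Adj (some (i, j)) u ↔
      u = cycleVertex n i j ∨ u = cycleVertex n i (j + 2) := by
  obtain ⟨j, hj⟩ := j
  rcases u with _ | ⟨i', j', hj'⟩ <;> cases j <;>
    simp only [genFriendshipGraph, cycleVertex] <;> grind

theorem cycleVertex_ne_add_two (hn : 3 ≤ n) (i : Fin m) {p : ℕ} (hp : p + 2 ≤ n) :
    cycleVertex n i p ≠ cycleVertex n i (p + 2) := by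
  cases p <;> simp only [cycleVertex] <;> grind

variable {A : Type*} [AddCommGroup A]

theorem sum_adj_some (hn : 3 ≤ n) (l : Option (Fin m × Fin (n - 1)) → A) (i : Fin m)
    (j : Fin (n - 1)) :
    (∑ u, if (genFriendshipGraph n m).Adj (some (i, j)) u then l u else 0) =
      l (cycleVertex n i j) + l (cycleVertex n i (j + 2)) :=
  sum_ite_of_iff_eq_or_eq (adj_some_iff i j) (cycleVertex_ne_add_two hn i (by lia)) l

theorem sum_adj_none (hn : 3 ≤ n) (l : Option (Fin m × Fin (n - 1)) → A) :
    (∑ u, if (genFriendshipGraph n m).Adj none u then l u else 0) =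
      ∑ i, (l (cycleVertex n i 1) + l (cycleVertex n i (n - 1))) := by
  have hfirst : 0 < n - 1 := by lia
  have hlast : n - 2 < n - 1 := by lia
  have hcv (i : Fin m) : cycleVertex n i (n - 1) = some (i, ⟨n - 2, hlast⟩) := by
    rw [← cycleVertex_add_one]
    congr 1
    simp only
    lia
  have hadj (i : Fin m) (j : Fin (n - 1)) : (genFriendshipGraph n m).Adj none (some (i, j)) ↔
      j = ⟨0, hfirst⟩ ∨ j = ⟨n - 2, hlast⟩ := by
    simp [genFriendshipGraph, Fin.ext_iff]
  rw [Fintype.sum_option, Fintype.sum_prod_type, if_neg (SimpleGraph.irrefl _), zero_add]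
  refine Finset.sum_congr rfl fun i _ => ?_
  rw [hcv, show cycleVertex n i 1 = some (i, ⟨0, hfirst⟩) from cycleVertex_add_one i ⟨0, hfirst⟩]
  exact sum_ite_of_iff_eq_or_eq (hadj i) (by grind) fun j => l (some (i, j))

theorem vertexMagic_iff_forall_cycleVertex (hn : 3 ≤ n) :
    vertexMagic (genFriendshipGraph n m) A ↔
      ∃ (l : Option (Fin m × Fin (n - 1)) → A) (μ : A), (∀ v, l v ≠ 0) ∧
        ∑ i, (l (cycleVertex n i 1) + l (cycleVertex n i (n - 1))) = μ ∧
        ∀ i p, p + 2 ≤ n → l (cycleVertex n i p) + l (cycleVertex n i (p + 2)) = μ := by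
  have hidx (p : ℕ) : p + 2 ≤ n ↔ p < n - 1 := by lia
  simp only [vertexMagic, Option.forall, Prod.forall, sum_adj_none hn, sum_adj_some hn,
    Fin.forall_iff, hidx]

theorem hasSpokeLabels_of_vertexMagic (hn : n % 4 = 2) (hn6 : 6 ≤ n) (hm : 1 ≤ m)
    (h : vertexMagic (genFriendshipGraph n m) A) : HasSpokeLabels A m := by
  obtain ⟨l, μ, hl, hcentre, hstep⟩ := (vertexMagic_iff_forall_cycleVertex (by lia)).1 h
  obtain ⟨k, rfl⟩ : ∃ k, n = 4 * k + 2 := ⟨n / 4, by lia⟩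
  have hperiod (i : Fin m) (r : ℕ) (hr : r ≤ 2) :
      l (cycleVertex _ i (r + 4 * k)) = l (cycleVertex _ i r) :=
    apply_add_four_mul_of_add_eq (a := fun p => l (cycleVertex _ i p)) (hstep i) r k (by lia)
  have hμ : μ = 2 • l none := by
    have hend := hstep ⟨0, hm⟩ (0 + 4 * k) (by lia)
    rw [hperiod _ 0 (by lia), zero_add, cycleVertex_of_le _ le_rfl, cycleVertex_zero] at hend
    rw [← hend, two_nsmul]
  refine ⟨l none, hl none, fun i => l (cycleVertex _ i 1), fun i => ⟨hl _, fun h1 => ?_⟩, ?_⟩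
  · have h13 := hstep i 1 (by lia)
    rw [show l (cycleVertex _ i 1) = 2 • l none from h1, hμ, add_eq_left] at h13
    exact hl _ h13
  · rw [← hμ, ← hcentre]
    refine Finset.sum_congr rfl fun i _ => ?_
    rw [show 4 * k + 2 - 1 = 1 + 4 * k by lia, hperiod i 1 (by lia), two_nsmul]

/-- The `4`-periodic label pattern `c, x, c, 2c - x, …` along a cycle, indexed by the position. -/
def spokePattern (c x : A) (p : ℕ) : A :=
  if p % 2 = 0 then c else if p % 4 = 1 then x else 2 • c - x

theorem spokePattern_add_spokePattern_add_two (c x : A) (p : ℕ) :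
    spokePattern c x p + spokePattern c x (p + 2) = 2 • c := by
  unfold spokePattern
  split_ifs <;> first | lia | abel

theorem spokePattern_ne_zero {c x : A} (hc : c ≠ 0) (hx : x ≠ 0 ∧ x ≠ 2 • c) (p : ℕ) :
    spokePattern c x p ≠ 0 := by
  unfold spokePattern
  split_ifs
  exacts [hc, hx.1, sub_ne_zero.2 hx.2.symm]

theorem spokePattern_of_mod_four_eq_one (c x : A) {p : ℕ} (hp : p % 4 = 1) :
    spokePattern c x p = x := by
  rw [spokePattern, if_neg (by lia), if_pos hp]

/-- The labeling of `genFriendshipGraph n m` with `c` at the centre and the pattern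
`spokePattern c (x i)` along the `i`-th cycle. -/
def spokeLabeling (n : ℕ) (c : A) (x : Fin m → A) : Option (Fin m × Fin (n - 1)) → A
  | none => c
  | some (i, j) => spokePattern c (x i) (j + 1)

theorem spokeLabeling_cycleVertex (hn : n % 2 = 0) (c : A) (x : Fin m → A) (i : Fin m) {p : ℕ}
    (hp : p ≤ n) : spokeLabeling n c x (cycleVertex n i p) = spokePattern c (x i) p := by
  have hcentre {q : ℕ} (hq : q % 2 = 0) : spokePattern c (x i) q = c := if_pos hq
  rcases p with _ | p
  · exact (hcentre rfl).symm
  by_cases h : p < n - 1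
  · rw [cycleVertex, dif_pos h, spokeLabeling]
  · rw [cycleVertex_of_le i (by lia), spokeLabeling, hcentre (by lia)]

theorem vertexMagic_of_hasSpokeLabels (hn : n % 4 = 2) (hn6 : 6 ≤ n)
    (h : HasSpokeLabels A m) : vertexMagic (genFriendshipGraph n m) A := by
  obtain ⟨c, hc, x, hx, hsum⟩ := h
  have hlabel (i : Fin m) {p : ℕ} (hp : p ≤ n) :=
    spokeLabeling_cycleVertex (n := n) (by lia) c x i hp
  refine (vertexMagic_iff_forall_cycleVertex (by lia)).2
    ⟨spokeLabeling n c x, 2 • c, ?_, ?_, fun i p hp => ?_⟩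
  · rintro (_ | ⟨i, j⟩)
    exacts [hc, spokePattern_ne_zero hc (hx i) _]
  · rw [← hsum]
    refine Finset.sum_congr rfl fun i _ => ?_
    rw [hlabel i (by lia), hlabel i (by lia), spokePattern_of_mod_four_eq_one _ _ rfl,
      spokePattern_of_mod_four_eq_one _ _ (by lia), two_nsmul]
  · rw [hlabel i (by lia), hlabel i hp, spokePattern_add_spokePattern_add_two]

theorem vertexMagic_iff_hasSpokeLabels (hn : n % 4 = 2) (hn6 : 6 ≤ n) (hm : 1 ≤ m) :
    vertexMagic (genFriendshipGraph n m) A ↔ HasSpokeLabels A m :=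
  ⟨hasSpokeLabels_of_vertexMagic hn hn6 hm, vertexMagic_of_hasSpokeLabels hn hn6⟩

end genFriendshipGraph

open genFriendshipGraph in
theorem stmt_18_general {n m : ℕ} (hn : n % 4 = 2) (hn6 : 6 ≤ n) (hm : 1 ≤ m)
    (A : Type*) [AddCommGroup A] [Nontrivial A] :
    vertexMagic (genFriendshipGraph n m) A ↔ (Nonempty (A ≃+ ZMod 3) → m % 3 = 1) := by
  by_cases hA : Nonempty (A ≃+ ZMod 3)
  · obtain ⟨e⟩ := hA
    have htransport : vertexMagic (genFriendshipGraph n m) A ↔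
        vertexMagic (genFriendshipGraph n m) (ZMod 3) :=
      ⟨vertexMagic_of_injective e.toAddMonoidHom e.injective,
        vertexMagic_of_injective e.symm.toAddMonoidHom e.symm.injective⟩
    rw [htransport, vertexMagic_iff_hasSpokeLabels hn hn6 hm, hasSpokeLabels_zmod_three_iff]
    exact (imp_iff_right ⟨e⟩).symm
  · exact iff_of_true
      ((vertexMagic_iff_hasSpokeLabels hn hn6 hm).2 (.of_not_addEquiv_zmod_three hm hA))
      fun h => absurd h hA

theorem stmt_18 (n m : ℕ) (hn : n % 4 = 2) (hn6 : 6 ≤ n) (hm : 1 ≤ m)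
    (hm3 : m % 3 ≠ 1)
    (A : Type*) [AddCommGroup A] (hA : Nontrivial A) :
    vertexMagic (genFriendshipGraph n m) A ↔ ¬ Nonempty (A ≃+ ZMod 3) := by
  rw [stmt_18_general hn hn6 hm A, imp_iff_not hm3]
end
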